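/- For the cycle C_n on n ≥ 4 vertices, write n = 3t − i with t ∈ ℕ and i ∈ {0,1,2}. Then τ(C_n) = (7n + i + 6)/(3(n+1)) if n ∈ {5, 7, 9, 10, 14, 17}, and τ(C_n) = (7n + i + 3)/(3(n+1)) otherwise. (Equivalently, τ(C_n) = (n·τ(P_n) + π(C_n))/(n+1), where π(C_n) = 4 for n ∈ {5,7,9,10,14,17} and π(C_n) = 3 for all other n ≥ 4.) -/

import Mathlib

open SimpleGraph Function

/-- A Thue colouring of a simple graph `G`: a proper vertex colouring such that the
colour sequence along any path (here: the support of a path-walk) is non-repetitive,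
i.e. it is never a square `l ++ l` with `l` nonempty. -/
def IsThueColoring {V α : Type*} (G : SimpleGraph V) (φ : V → α) : Prop :=
  (∀ ⦃a b : V⦄, G.Adj a b → φ a ≠ φ b) ∧
  ∀ ⦃a b : V⦄ (p : G.Walk a b), p.IsPath →
    ∀ l : List α, l ≠ [] → p.support.map φ ≠ l ++ l

/-- The Thue chromatic number `π(G)`: the least number of colours admitting a Thue
colouring of `G`. -/
noncomputable def thueNumber {V : Type*} (G : SimpleGraph V) : ℕ :=
  sInf {k | ∃ φ : V → Fin k, IsThueColoring G φ}
/-- `l` is an ordering (a listing without repetition) of the edges of `G`. -/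
def IsEdgeOrdering {V : Type*} (G : SimpleGraph V) (l : List (Sym2 V)) : Prop :=
  l.Nodup ∧ ∀ e, e ∈ l ↔ e ∈ G.edgeSet

/-- The τ-value of an edge ordering: the average `(1/(ε+1)) Σ_{i=0}^{ε} π(G*ᵢ)` of the
Thue numbers of the graphs obtained by successively deleting the edges in order. -/
noncomputable def tauValue {V : Type*} (G : SimpleGraph V) (l : List (Sym2 V)) : ℝ :=
  (∑ i ∈ Finset.range (l.length + 1),
    (thueNumber (G.deleteEdges {e | e ∈ l.take i}) : ℝ)) / (l.length + 1)

/-- The τ-index of a graph: the minimum τ-value over all orderings of its edges. -/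
noncomputable def tauIndex {V : Type*} (G : SimpleGraph V) : ℝ :=
  sInf {x | ∃ l : List (Sym2 V), IsEdgeOrdering G l ∧ tauValue G l = x}

/-!
Thue colourings of a cycle are the ternary (or quaternary) words all of whose conjugates are
square-free. Currie's theorem on the lengths of such ternary words is proved by induction: a letter
`a` of a short circular word is replaced by one of several blocks of different lengths, each
starting with a marker that occurs nowhere else, so that a long square in the image would pull back
to a square in the short word.

In any edge ordering, after fewer than `n / 3` deletions some path on four vertices survives, which
needs three colours, and before the last deletion some edge survives. Conversely every proper
subgraph of the cycle needs at most three colours, and first cutting the cycle into paths on at most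
three vertices, for which two colours suffice, meets these lower bounds at every step.
-/

section Words

variable {α β : Type*}

/-- The word `w` has a nonempty square `u ++ u` as a prefix. -/
def StartsWithSquare (w : List α) : Prop :=
  ∃ u, u ≠ [] ∧ u ++ u <+: w

/-- Square-free (non-repetitive) words: no factor has the form `u ++ u` with `u` nonempty. -/
def IsSquareFree (w : List α) : Prop :=
  ∀ u, u ++ u <:+: w → u = []

/-- Circularly square-free words: all conjugates are square-free. These are the words read around
a non-repetitively coloured cycle. -/
def IsCircSquareFree (w : List α) : Prop :=
  ∀ v, v ~r w → IsSquareFree v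

theorem isSquareFree_iff_tails {w : List α} :
    IsSquareFree w ↔ ∀ v ∈ w.tails, ¬ StartsWithSquare v := by
  simp only [IsSquareFree, StartsWithSquare, List.mem_tails, List.infix_iff_prefix_suffix]
  exact ⟨fun h v hv ⟨u, hu, huv⟩ => hu (h u ⟨v, huv, hv⟩),
    fun h u ⟨v, huv, hv⟩ => by_contra fun hu => h v hv ⟨u, hu, huv⟩⟩

theorem IsSquareFree.of_infix {v w : List α} (hw : IsSquareFree w) (h : v <:+: w) :
    IsSquareFree v :=
  fun u hu => hw u (hu.trans h)

theorem IsSquareFree.map {f : α → β} (hf : Injective f) {w : List α} (h : IsSquareFree w) :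
    IsSquareFree (w.map f) := by
  intro u hu
  obtain ⟨l, hl, hul⟩ := List.infix_map_iff.1 hu
  obtain ⟨u₁, u₂, rfl, rfl, h₂⟩ := List.map_eq_append_iff.1 hul.symm
  obtain rfl := List.map_injective_iff.2 hf h₂
  rw [h u₂ hl, List.map_nil]

theorem IsSquareFree.of_reverse {w : List α} (h : IsSquareFree w.reverse) : IsSquareFree w :=
  fun u hu => List.reverse_eq_nil_iff.1 <| h u.reverse <| by
    rwa [← List.reverse_append, List.reverse_infix]

theorem isSquareFree_of_nodup {w : List α} (h : w.Nodup) : IsSquareFree w := fun _ hu =>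
  List.eq_nil_iff_forall_not_mem.2 fun _ ha =>
    (List.nodup_append.1 (h.sublist hu.sublist)).2.2 _ ha _ ha rfl

/-- Only squares of length two fit into such a word. -/
theorem isSquareFree_of_length_le_three {w : List α} (h : w.IsChain (· ≠ ·))
    (hlen : w.length ≤ 3) : IsSquareFree w := by
  intro u hu
  have hu_len := hu.length_le
  rw [List.length_append] at hu_len
  match u, hu, hu_len with
  | [], _, _ => rfl
  | [a], hu, _ => exact absurd rfl (List.isChain_cons_cons.1 (h.infix hu)).1
  | _ :: _ :: _, _, hu_len => simp at hu_len; omega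

theorem IsCircSquareFree.isSquareFree {w : List α} (h : IsCircSquareFree w) : IsSquareFree w :=
  h w (List.IsRotated.refl w)

theorem IsCircSquareFree.rotated {v w : List α} (h : IsCircSquareFree w) (hv : v ~r w) :
    IsCircSquareFree v :=
  fun x hx => h x (hx.trans hv)

theorem IsCircSquareFree.map {f : α → β} (hf : Injective f) {w : List α}
    (h : IsCircSquareFree w) : IsCircSquareFree (w.map f) := by
  intro v hv
  obtain ⟨k, rfl⟩ := hv.symm
  rw [← List.map_rotate]
  exact (h _ (List.IsRotated.forall w k)).map hf

theorem isCircSquareFree_iff_cyclicPermutations {w : List α} :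
    IsCircSquareFree w ↔ ∀ v ∈ w.cyclicPermutations, ¬ StartsWithSquare v := by
  simp only [List.mem_cyclicPermutations_iff]
  refine ⟨fun h v hv ⟨u, hu, huv⟩ => hu (h v hv u huv.isInfix), fun h v hv u => ?_⟩
  rintro ⟨x, y, rfl⟩
  by_contra hu
  -- Rotating `x` to the end turns the square into a prefix.
  refine h (u ++ u ++ (y ++ x)) (.trans ?_ hv) ⟨u, hu, List.prefix_append _ _⟩
  simpa only [List.append_assoc] using (List.isRotated_append (l := x) (l' := u ++ u ++ y)).symm

theorem IsCircSquareFree.isSquareFree_cons_append {a : α} {w : List α}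
    (h : IsCircSquareFree (a :: w)) (hw : w ≠ []) : IsSquareFree (a :: w ++ [a]) := by
  rintro u ⟨_ | ⟨b, x⟩, y, hxy⟩
  · rcases y.eq_nil_or_concat with rfl | ⟨y, c, rfl⟩
    · rcases u with - | ⟨b, z⟩
      · rfl
      obtain ⟨rfl, hz⟩ : b = a ∧ z ++ b :: z = w ++ [a] := by simpa using hxy
      rcases z.eq_nil_or_concat with rfl | ⟨z, c, rfl⟩
      · simp_all
      obtain ⟨rfl, ⟨⟩⟩ : z ++ c :: b :: z = w ∧ [c] = [b] :=
        List.append_inj' (by simpa using hz) rfl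
      exact absurd (h.isSquareFree [b] ⟨b :: z, z, by simp⟩) (by simp)
    · have hy : u ++ u ++ y ++ [c] = a :: w ++ [a] := by simpa using hxy
      exact h.isSquareFree u ⟨[], y, (List.append_inj' hy rfl).1⟩
  · have hxy' : x ++ (u ++ u) ++ y = w ++ [a] := (List.cons.inj hxy).2
    exact h _ (List.isRotated_append (l := [a])).symm u ⟨x, y, hxy'⟩

end Words

section Decidability

theorem startsWithSquare_iff_take_drop {α : Type*} {w : List α} :
    StartsWithSquare w ↔
      ∃ p < w.length / 2, w.take (p + 1) = (w.drop (p + 1)).take (p + 1) := by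
  constructor
  · rintro ⟨u, hu, y, rfl⟩
    have hlen := List.length_pos_iff.2 hu
    refine ⟨u.length - 1, by grind, ?_⟩
    simp [Nat.sub_add_cancel hlen]
  · rintro ⟨p, hp, h⟩
    refine ⟨w.take (p + 1), List.ne_nil_of_length_pos (by rw [List.length_take]; omega),
      w.drop (p + 1 + (p + 1)), ?_⟩
    nth_rw 2 [h]
    rw [← List.take_add, List.take_append_drop]

variable {k : ℕ}

theorem ofDigits_map_val_inj {u v : List (Fin k)} (h : u.length = v.length) :
    Nat.ofDigits (k + 2) (u.map Fin.val) = Nat.ofDigits (k + 2) (v.map Fin.val) ↔ u = v := by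
  refine ⟨fun huv => List.map_injective_iff.2 Fin.val_injective ?_, fun huv => by rw [huv]⟩
  exact Nat.ofDigits_inj_of_len_eq (by omega) (by simpa using h) (by grind) (by grind) huv

theorem startsWithSquare_iff_ofDigits {w : List (Fin k)} :
    StartsWithSquare w ↔ ∃ p < w.length / 2,
      let m := Nat.ofDigits (k + 2) (w.map Fin.val)
      m % (k + 2) ^ (p + 1) = m / (k + 2) ^ (p + 1) % (k + 2) ^ (p + 1) := by
  have hdigits : ∀ l ∈ w.map Fin.val, l < k + 2 := by grind
  rw [startsWithSquare_iff_take_drop]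
  refine exists_congr fun p => and_congr_right fun hp => ?_
  dsimp only
  rw [Nat.ofDigits_mod_pow_eq_ofDigits_take _ (by omega) _ hdigits,
    Nat.ofDigits_div_pow_eq_ofDigits_drop _ (by omega) _ hdigits,
    Nat.ofDigits_mod_pow_eq_ofDigits_take _ (by omega) _
      fun l hl => hdigits l (List.mem_of_mem_drop hl),
    ← List.map_take, ← List.map_drop, ← List.map_take, ofDigits_map_val_inj (by grind)]

/- Comparing the two halves as base `k + 2` numerals lets the kernel decide concrete instances with
its built-in arithmetic. -/
instance : DecidablePred (StartsWithSquare (α := Fin k)) := fun _ =>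
  decidable_of_iff _ startsWithSquare_iff_ofDigits.symm

instance : DecidablePred (IsSquareFree (α := Fin k)) := fun _ =>
  decidable_of_iff _ isSquareFree_iff_tails.symm

instance : DecidablePred (IsCircSquareFree (α := Fin k)) := fun _ =>
  decidable_of_iff _ isCircSquareFree_iff_cyclicPermutations.symm

end Decidability

section MarkerSubstitution

variable {α β γ : Type*}

/-- A substitution `φ` into words that all start with the marker `M`, where `M` occurs in `φ b ++ M`
only at the two ends, so that occurrences of `M` in an image reveal the block boundaries. Several
letters `b` may share the type `π b`; the last two conditions say that blocks of different types
cannot overlap too much. -/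
structure IsMarkerSubstitution (M : List α) (φ : β → List α) (π : β → γ) : Prop where
  marker_ne_nil : M ≠ []
  marker_prefix : ∀ b, M <+: φ b
  eq_nil_of_marker : ∀ b u v, φ b ++ M = u ++ M ++ v → u = [] ∨ v = []
  isSquareFree : ∀ b, IsSquareFree (φ b ++ M)
  prefix_free : ∀ b c, φ b <+: φ c → b = c
  interlace : ∀ b₁ b₂ b₃ p s, φ b₂ = p ++ s → s <:+ φ b₁ → p <+: φ b₃ → π b₁ = π b₂ ∨ π b₂ = π b₃
  straddle : ∀ b c p q y, π b ≠ π c → M = p ++ q → p ≠ [] → q ≠ [] → y <:+ φ b →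
    ¬ p ++ y ++ p <+: φ c ++ M

theorem exists_first_infix {M x : List α} (hM : M ≠ []) (h : M <:+: x) :
    ∃ y r, x = y ++ M ++ r ∧ ¬ M <:+: y := by
  induction x with
  | nil => exact absurd (List.infix_nil.1 h) hM
  | cons a x ih =>
    by_cases hMx : M <+: a :: x
    · obtain ⟨r, hr⟩ := hMx
      exact ⟨[], r, hr.symm, fun hMnil => hM (List.infix_nil.1 hMnil)⟩
    · obtain ⟨y, r, rfl, hy⟩ := ih ((List.infix_cons_iff.1 h).resolve_left hMx)
      refine ⟨a :: y, r, rfl, fun hMy => ?_⟩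
      rcases List.infix_cons_iff.1 hMy with hMy | hMy
      · exact hMx (hMy.trans ⟨M ++ r, by simp⟩)
      · exact hy hMy

theorem exists_straddle {M x z t : List α} (hM : ¬ M <:+: x) (hx : x ++ x = z ++ M ++ t) :
    ∃ p q, M = p ++ q ∧ p ≠ [] ∧ q ≠ [] ∧ x = z ++ p := by
  rw [List.append_assoc] at hx
  rcases List.append_eq_append_iff.1 hx with ⟨a, -, rfl⟩ | ⟨p, rfl, hp⟩
  · exact absurd ⟨a, t, List.append_assoc _ _ _⟩ hM
  rcases List.append_eq_append_iff.1 hp with ⟨c, rfl, -⟩ | ⟨q, rfl, hq⟩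
  · exact absurd ⟨z, c, List.append_assoc _ _ _⟩ hM
  refine ⟨p, q, rfl, ?_, ?_, rfl⟩
  · rintro rfl
    exact hM ⟨[], t, hq.symm⟩
  · rintro rfl
    exact hM ⟨z, [], by simp⟩

theorem exists_of_flatMap_eq_append {φ : β → List α} {W : List β} {x y : List α} (hW : W ≠ [])
    (h : W.flatMap φ = x ++ y) : ∃ W₁ b W₂ p s, W = W₁ ++ b :: W₂ ∧ φ b = p ++ s ∧
      x = W₁.flatMap φ ++ p ∧ y = s ++ W₂.flatMap φ := by
  induction W generalizing x with
  | nil => exact absurd rfl hW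
  | cons b W ih =>
    rw [List.flatMap_cons] at h
    rcases List.append_eq_append_iff.1 h with ⟨x', rfl, hx'⟩ | ⟨s, hs, hy⟩
    · rcases eq_or_ne W [] with rfl | hW'
      · exact ⟨[], b, [], φ b, [], rfl, by simp, by simp_all, by simp_all⟩
      · obtain ⟨W₁, c, W₂, p, s, rfl, hc, rfl, rfl⟩ := ih hW' hx'
        exact ⟨b :: W₁, c, W₂, p, s, rfl, hc, by simp, rfl⟩
    · exact ⟨[], b, W, x, s, rfl, hs, by simp, hy⟩

namespace IsMarkerSubstitution

variable {M : List α} {φ : β → List α} {π : β → γ} (h : IsMarkerSubstitution M φ π)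
include h

theorem image_ne_nil (b : β) : φ b ≠ [] := fun hb =>
  h.marker_ne_nil (List.prefix_nil.1 (hb ▸ h.marker_prefix b))

theorem marker_prefix_flatMap_append (W : List β) : M <+: W.flatMap φ ++ M := by
  cases W with
  | nil => simp
  | cons b W =>
    rw [List.flatMap_cons, List.append_assoc]
    exact (h.marker_prefix b).trans (List.prefix_append _ _)

theorem exists_cut {W : List β} {u v : List α} (hW : W.flatMap φ = u ++ M ++ v) :
    ∃ W₁ W₂, W = W₁ ++ W₂ ∧ W₁.flatMap φ = u ∧ W₂.flatMap φ = M ++ v := by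
  induction W generalizing u with
  | nil => exact ⟨[], [], rfl, by simp_all⟩
  | cons b W ih =>
    rw [List.flatMap_cons, List.append_assoc] at hW
    rcases List.append_eq_append_iff.1 hW with ⟨u', rfl, hu'⟩ | ⟨t, ht, hMv⟩
    · obtain ⟨W₁, W₂, rfl, rfl, hW₂⟩ := ih (hu'.trans (List.append_assoc _ _ _).symm)
      exact ⟨b :: W₁, W₂, rfl, rfl, hW₂⟩
    obtain ⟨v', hv'⟩ : M <+: t ++ M := by
      refine List.prefix_of_prefix_length_le (l₃ := t ++ (W.flatMap φ ++ M)) ?_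
        ((List.prefix_append_right_inj t).2 (h.marker_prefix_flatMap_append W)) (by simp)
      rw [← List.append_assoc, ← hMv, List.append_assoc]
      exact List.prefix_append _ _
    rcases h.eq_nil_of_marker b u v' (by rw [ht, List.append_assoc, ← hv', List.append_assoc])
      with rfl | rfl
    · exact ⟨[], b :: W, rfl, rfl, by rw [List.flatMap_cons, hMv, ht, List.nil_append]⟩
    · obtain rfl : t = [] := by simpa using hv'
      exact ⟨[b], W, rfl, by simpa using ht, hMv.symm⟩

theorem eq_of_prefix_of_prefix {b c : β} {w : List α} (hb : φ b <+: w) (hc : φ c <+: w) :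
    b = c :=
  (List.prefix_or_prefix_of_prefix hb hc).elim (h.prefix_free b c) fun hcb =>
    (h.prefix_free c b hcb).symm

theorem prefix_of_flatMap_prefix {V W : List β} (hVW : V.flatMap φ <+: W.flatMap φ) :
    V <+: W := by
  induction V generalizing W with
  | nil => exact List.nil_prefix
  | cons b V ih =>
    cases W with
    | nil => simp_all [h.image_ne_nil]
    | cons c W =>
      rw [List.flatMap_cons, List.flatMap_cons] at hVW
      obtain rfl := h.eq_of_prefix_of_prefix ((List.prefix_append _ _).trans hVW)
        (List.prefix_append _ _)
      exact (List.prefix_cons_inj b).2 (ih ((List.prefix_append_right_inj _).1 hVW))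

theorem exists_last_block {W : List β} {u y : List α} (hW : W.flatMap φ = u ++ y)
    (hu : W ≠ []) (hy : ¬ M <:+: y) :
    ∃ V b p, W = V ++ [b] ∧ φ b = p ++ y ∧ u = V.flatMap φ ++ p ∧ p ≠ [] := by
  obtain ⟨V, b, rfl⟩ := (List.eq_nil_or_concat' W).resolve_left hu
  rw [List.flatMap_append, List.flatMap_singleton] at hW
  rcases List.append_eq_append_iff.1 hW with ⟨p, hp, hb⟩ | ⟨c, _, rfl⟩
  · refine ⟨V, b, p, rfl, hb, hp, ?_⟩
    rintro rfl
    exact hy (List.nil_append y ▸ hb ▸ (h.marker_prefix b).isInfix)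
  · exact absurd ((h.marker_prefix b).isInfix.trans (List.suffix_append _ _).isInfix) hy

theorem not_marker_infix_of_square {W : List β} (hW : IsSquareFree (W.map π)) {x : List α}
    (hx : x ++ x <:+: W.flatMap φ) : ¬ M <:+: x := by
  intro hM
  obtain ⟨y, r, rfl, hy⟩ := exists_first_infix h.marker_ne_nil hM
  obtain ⟨u, v, huv⟩ := hx
  obtain ⟨W₁, W', rfl, hW₁, hW'⟩ := h.exists_cut (W := W) (u := u ++ y)
    (v := r ++ y ++ M ++ r ++ v) (by simp [← huv])
  obtain ⟨W₂, W₃, rfl, hW₂, hW₃⟩ := h.exists_cut (W := W') (u := M ++ r ++ y) (v := r ++ v)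
    (by simp [hW'])
  obtain ⟨V, b₂, p, rfl, hb₂, hVp, hp⟩ := h.exists_last_block hW₂
    (by rintro rfl; simp_all [h.marker_ne_nil]) hy
  obtain ⟨W₃, rfl⟩ := h.prefix_of_flatMap_prefix (V := V) (W := W₃)
    ⟨p ++ v, by rw [hW₃, ← List.append_assoc, ← hVp, List.append_assoc]⟩
  replace hW₃ : W₃.flatMap φ = p ++ v := by
    rw [List.flatMap_append, ← List.append_assoc, hVp, List.append_assoc] at hW₃
    exact List.append_cancel_left hW₃
  obtain - | ⟨b₃, W₃⟩ := W₃
  · simp_all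
  have hne₂₃ : π b₂ ≠ π b₃ := fun heq => by
    have := hW (V.map π ++ [π b₂]) ⟨W₁.map π, W₃.map π, by simp [heq]⟩
    simp at this
  have hpb₃ : p <+: φ b₃ := by
    refine (List.prefix_or_prefix_of_prefix (l₃ := p ++ v) (List.prefix_append _ _)
      (hW₃ ▸ List.prefix_append _ _)).resolve_right fun hb₃ => hne₂₃ ?_
    rw [h.prefix_free b₃ b₂ (hb₂ ▸ hb₃.trans (List.prefix_append _ _))]
  rcases eq_or_ne y [] with rfl | hy_ne
  · exact hne₂₃ (congrArg π (h.prefix_free b₂ b₃ (by simpa [hb₂] using hpb₃)))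
  obtain ⟨V₁, b₁, p₁, rfl, hb₁, -, -⟩ := h.exists_last_block hW₁
    (by rintro rfl; simp_all) hy
  have hπ : π b₁ = π b₂ := (h.interlace b₁ b₂ b₃ p y hb₂ ⟨p₁, hb₁.symm⟩ hpb₃).resolve_right hne₂₃
  have := hW (π b₁ :: V.map π) ⟨V₁.map π, π b₃ :: W₃.map π, by simp [hπ]⟩
  simp at this

theorem eq_nil_of_square_prefix {b : β} {W : List β} (hW : IsSquareFree ((b :: W).map π))
    {x z v : List α} (hM : ¬ M <:+: x) (hz : z <:+ φ b) (hx : x ++ x ++ v = z ++ W.flatMap φ) :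
    x = [] := by
  rcases List.prefix_or_prefix_of_prefix (l₁ := x ++ x) (l₂ := z ++ M)
    (l₃ := z ++ (W.flatMap φ ++ M)) ⟨v ++ M, by rw [← List.append_assoc, hx, List.append_assoc]⟩
    ((List.prefix_append_right_inj z).2 (h.marker_prefix_flatMap_append W)) with hxx | ⟨t, ht⟩
  · obtain ⟨z', hz'⟩ := hz
    exact h.isSquareFree b x (hxx.isInfix.trans ⟨z', [], by simp [← hz']⟩)
  exfalso
  obtain ⟨p, q, hpq, hp, hq, rfl⟩ := exists_straddle hM ht.symm
  have hφW : p ++ (z ++ p) ++ v = W.flatMap φ :=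
    List.append_cancel_left (as := z) (by rw [← hx]; simp only [List.append_assoc])
  obtain - | ⟨c, W⟩ := W
  · simp_all
  have hbc : π b ≠ π c := fun heq => by
    have := hW [π b] ⟨[], W.map π, by simp [heq]⟩
    simp at this
  rcases List.prefix_or_prefix_of_prefix (l₁ := p ++ z ++ p) (l₂ := φ c ++ M)
    (l₃ := φ c ++ (W.flatMap φ ++ M)) ⟨v ++ M, by
      rw [← List.append_assoc (φ c), ← List.flatMap_cons, ← hφW]; simp only [List.append_assoc]⟩
    ((List.prefix_append_right_inj _).2 (h.marker_prefix_flatMap_append W)) with hpzp | ⟨e, he⟩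
  · exact h.straddle b c p q z hbc hpq hp hq hz hpzp
  · -- Here the marker after `φ c` would lie inside the second copy of the root of the square.
    have hpc : p <+: φ c := (hpq ▸ List.prefix_append p q).trans (h.marker_prefix c)
    obtain ⟨f, hf⟩ := hpc
    refine hM ⟨f, e, List.append_cancel_left (as := p) ?_⟩
    simpa [← hf] using he

theorem isSquareFree_flatMap {W : List β} (hW : IsSquareFree (W.map π)) :
    IsSquareFree (W.flatMap φ) := by
  intro x hx
  have hM := h.not_marker_infix_of_square hW hx
  obtain ⟨u, v, huv⟩ := hx
  by_contra hx_ne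
  obtain ⟨W₁, b, W₂, p, z, rfl, hb, -, hz⟩ := exists_of_flatMap_eq_append (φ := φ) (W := W)
    (x := u) (y := x ++ x ++ v) (by rintro rfl; simp_all) (by simp [← huv])
  refine hx_ne (h.eq_nil_of_square_prefix (b := b) (W := W₂) (hW.of_infix ?_) hM ⟨p, hb.symm⟩ hz)
  exact ((List.suffix_append _ _).map π).isInfix

theorem isCircSquareFree_flatMap {W : List β} (hlen : 2 ≤ W.length)
    (hW : IsCircSquareFree (W.map π)) : IsCircSquareFree (W.flatMap φ) := by
  intro v hv
  obtain ⟨k, hk, rfl⟩ := List.isRotated_iff_mod.1 hv.symm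
  obtain ⟨W₁, b, W₂, p, s, rfl, hb, hp, hs⟩ := exists_of_flatMap_eq_append (W := W)
    (List.ne_nil_of_length_pos (by omega)) (List.take_append_drop k _).symm
  have hrot : IsCircSquareFree (π b :: (W₂ ++ W₁).map π) :=
    hW.rotated (by simpa using (List.isRotated_append (l := b :: W₂) (l' := W₁)).map π)
  have hlong : IsSquareFree ((b :: (W₂ ++ W₁) ++ [b]).map π) := by
    simpa using hrot.isSquareFree_cons_append (by simp at hlen ⊢; grind)
  refine (h.isSquareFree_flatMap hlong).of_infix ⟨p, s, ?_⟩
  rw [List.rotate_eq_drop_append_take hk, hp, hs]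
  simp [hb]

end IsMarkerSubstitution

end MarkerSubstitution

section Blocks

/-- The marker at the start of every block. -/
def marker : List (Fin 3) := [0, 1, 0]

/-- For each letter of a ternary word, eight blocks that may replace it. The `i`-th block has length
`24 + blockExcess i` whatever the letter. The blocks were found by computer search. -/
def block : Fin 3 → Fin 8 → List (Fin 3) :=
  ![![[0, 1, 0, 2, 1, 0, 1, 2, 0, 2, 1, 0, 2, 0, 1, 2, 1, 0, 1, 2, 0, 2, 1, 2],
     [0, 1, 0, 2, 1, 2, 0, 2, 1, 0, 2, 0, 1, 2, 0, 2, 1, 2, 0, 1, 2, 1, 0, 1, 2],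
     [0, 1, 0, 2, 1, 0, 1, 2, 0, 2, 1, 0, 2, 0, 1, 2, 0, 2, 1, 2, 0, 1, 2, 1, 0, 1, 2],
     [0, 1, 0, 2, 1, 0, 1, 2, 0, 2, 1, 0, 2, 0, 1, 2, 1, 0, 2, 1, 2, 0, 1, 2, 1, 0, 1, 2],
     [0, 1, 0, 2, 1, 2, 0, 2, 1, 0, 2, 0, 1, 2, 0, 2, 1, 0, 1, 2, 1, 0, 2, 1, 2, 0, 1, 2, 1, 0, 1,
      2],
     [0, 1, 0, 2, 1, 2, 0, 1, 2, 1, 0, 2, 1, 2, 0, 2, 1, 0, 2, 0, 1, 2, 0, 2, 1, 2, 0, 1, 2, 1, 0,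
      1, 2],
     [0, 1, 0, 2, 1, 2, 0, 2, 1, 0, 2, 0, 1, 2, 1, 0, 2, 1, 2, 0, 2, 1, 0, 1, 2, 1, 0, 2, 0, 1, 2,
      1, 0, 1, 2],
     [0, 1, 0, 2, 1, 0, 1, 2, 0, 2, 1, 0, 2, 0, 1, 2, 1, 0, 1, 2, 0, 2, 1, 0, 1, 2, 1, 0, 2, 0, 1,
      2, 1, 0, 1, 2]],
   ![[0, 1, 0, 2, 0, 1, 2, 0, 2, 1, 0, 1, 2, 1, 0, 2, 0, 1, 2, 0, 2, 1, 0, 2],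
     [0, 1, 0, 2, 0, 1, 2, 0, 2, 1, 2, 0, 1, 2, 1, 0, 2, 0, 1, 2, 0, 2, 1, 0, 2],
     [0, 1, 0, 2, 1, 0, 1, 2, 1, 0, 2, 0, 1, 2, 1, 0, 1, 2, 0, 2, 1, 0, 1, 2, 1, 0, 2],
     [0, 1, 0, 2, 0, 1, 2, 0, 2, 1, 0, 2, 0, 1, 2, 1, 0, 1, 2, 0, 2, 1, 0, 1, 2, 1, 0, 2],
     [0, 1, 0, 2, 0, 1, 2, 0, 2, 1, 0, 1, 2, 1, 0, 2, 1, 2, 0, 1, 2, 1, 0, 2, 0, 1, 2, 0, 2, 1, 0,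
      2],
     [0, 1, 0, 2, 0, 1, 2, 1, 0, 2, 1, 2, 0, 2, 1, 0, 2, 0, 1, 2, 1, 0, 1, 2, 0, 2, 1, 0, 1, 2, 1,
      0, 2],
     [0, 1, 0, 2, 1, 0, 1, 2, 1, 0, 2, 0, 1, 2, 0, 2, 1, 0, 2, 0, 1, 2, 1, 0, 1, 2, 0, 2, 1, 0, 1,
      2, 1, 0, 2],
     [0, 1, 0, 2, 0, 1, 2, 0, 2, 1, 0, 1, 2, 1, 0, 2, 1, 2, 0, 1, 2, 1, 0, 2, 0, 1, 2, 0, 2, 1, 0,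
      1, 2, 1, 0, 2]],
   ![[0, 1, 0, 2, 1, 2, 0, 2, 1, 0, 1, 2, 1, 0, 2, 0, 1, 2, 0, 2, 1, 0, 1, 2],
     [0, 1, 0, 2, 1, 0, 1, 2, 1, 0, 2, 1, 2, 0, 2, 1, 0, 2, 0, 1, 2, 1, 0, 1, 2],
     [0, 1, 0, 2, 1, 0, 1, 2, 0, 2, 1, 2, 0, 1, 2, 1, 0, 2, 0, 1, 2, 0, 2, 1, 0, 1, 2],
     [0, 1, 0, 2, 1, 0, 1, 2, 1, 0, 2, 1, 2, 0, 1, 2, 1, 0, 2, 0, 1, 2, 0, 2, 1, 0, 1, 2],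
     [0, 1, 0, 2, 1, 0, 1, 2, 0, 2, 1, 2, 0, 1, 2, 1, 0, 2, 1, 2, 0, 2, 1, 0, 2, 0, 1, 2, 1, 0, 1,
      2],
     [0, 1, 0, 2, 1, 0, 1, 2, 0, 2, 1, 2, 0, 1, 2, 1, 0, 1, 2, 0, 2, 1, 0, 2, 0, 1, 2, 0, 2, 1, 0,
      1, 2],
     [0, 1, 0, 2, 1, 2, 0, 2, 1, 0, 1, 2, 0, 2, 1, 2, 0, 1, 2, 1, 0, 1, 2, 0, 2, 1, 0, 2, 0, 1, 2,
      1, 0, 1, 2],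
     [0, 1, 0, 2, 1, 2, 0, 2, 1, 0, 1, 2, 0, 2, 1, 2, 0, 1, 2, 1, 0, 2, 1, 2, 0, 2, 1, 0, 2, 0, 1,
      2, 1, 0, 1, 2]]]

/-- The lengths of the blocks beyond 24; sums of `n ≥ 2` of these excesses fill `[0, 12n]`. -/
def blockExcess : Fin 8 → ℕ := ![0, 1, 3, 4, 8, 9, 11, 12]

theorem length_block : ∀ a i, (block a i).length = 24 + blockExcess i := by
  decide +kernel

theorem marker_prefix_block : ∀ a i, marker <+: block a i := by
  decide +kernel

theorem eq_zero_of_marker_prefix_drop : ∀ a i, ∀ k < (block a i).length,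
    marker <+: (block a i ++ marker).drop k → k = 0 := by
  decide +kernel

theorem isSquareFree_block_append_marker : ∀ a i, IsSquareFree (block a i ++ marker) := by
  decide +kernel

theorem block_prefix_free : ∀ a i b j, block a i <+: block b j → a = b ∧ i = j := by
  decide +kernel

theorem eq_of_take_block_eq : ∀ a i b j, (block a i).take 12 = (block b j).take 12 → a = b := by
  decide +kernel

theorem eq_of_rtake_block_eq : ∀ a i b j,
    (block a i).rtake 12 = (block b j).rtake 12 → a = b := by
  decide +kernel

theorem not_straddle_block : ∀ a i b j, a ≠ b → ∀ k < 2, ∀ y ∈ (block a i).tails,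
    ¬ marker.take (k + 1) ++ y ++ marker.take (k + 1) <+: block b j ++ marker := by
  decide +kernel

theorem isMarkerSubstitution_block :
    IsMarkerSubstitution marker (fun b : Fin 3 × Fin 8 => block b.1 b.2) Prod.fst where
  marker_ne_nil := List.cons_ne_nil _ _
  marker_prefix b := marker_prefix_block b.1 b.2
  eq_nil_of_marker b u v huv := by
    by_contra! hne
    have hu := List.length_pos_iff.2 hne.1
    have hv := List.length_pos_iff.2 hne.2
    have hlen := congrArg List.length huv
    simp only [List.length_append] at hlen
    refine hu.ne' (eq_zero_of_marker_prefix_drop b.1 b.2 u.length (by omega) ⟨v, ?_⟩)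
    rw [huv, List.append_assoc, List.drop_left]
  isSquareFree b := isSquareFree_block_append_marker b.1 b.2
  prefix_free b c hbc := Prod.ext_iff.2 (block_prefix_free b.1 b.2 c.1 c.2 hbc)
  interlace := by
    -- Blocks have length at least 24, so one of the two parts has at least 12 letters.
    rintro ⟨a₁, i₁⟩ ⟨a₂, i₂⟩ ⟨a₃, i₃⟩ p s hps ⟨s', hs⟩ ⟨p', hp⟩
    dsimp only at hps hs hp ⊢
    have hlen := congrArg List.length hps
    rw [length_block, List.length_append] at hlen
    rcases le_total 12 s.length with h12 | h12
    · refine .inl (eq_of_rtake_block_eq a₁ i₁ a₂ i₂ ?_)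
      have h12' : 12 ≤ s.reverse.length := by rwa [List.length_reverse]
      rw [hps, ← hs, List.rtake_eq_reverse_take_reverse, List.rtake_eq_reverse_take_reverse,
        List.reverse_append, List.reverse_append, List.take_append_of_le_length h12',
        List.take_append_of_le_length h12']
    · refine .inr (eq_of_take_block_eq a₂ i₂ a₃ i₃ ?_)
      rw [hps, ← hp, List.take_append_of_le_length (by omega),
        List.take_append_of_le_length (by omega)]
  straddle b c p q y hbc hpq hp hq hy := by
    have hp_pos := List.length_pos_iff.2 hp
    have hq_pos := List.length_pos_iff.2 hq
    have hlen : 3 = p.length + q.length := by simpa [marker] using congrArg List.length hpq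
    have hpM : p = marker.take (p.length - 1 + 1) := by
      rw [hpq, Nat.sub_add_cancel hp_pos, List.take_left]
    rw [hpM]
    exact not_straddle_block b.1 b.2 c.1 c.2 hbc _ (by omega) y ((List.mem_tails _ _).2 hy)

theorem exists_sum_blockExcess {n m : ℕ} (hn : 2 ≤ n) (hm : m ≤ 12 * n) :
    ∃ js : List (Fin 8), js.length = n ∧ (js.map blockExcess).sum = m := by
  induction n, hn using Nat.le_induction generalizing m with
  | base =>
    obtain ⟨i, j, hij⟩ : ∃ i j, blockExcess i + blockExcess j = m := by
      revert m; decide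
    exact ⟨[i, j], rfl, by simpa using hij⟩
  | succ n hn ih =>
    obtain ⟨j, hj, hjm⟩ : ∃ j, blockExcess j ≤ m ∧ m - blockExcess j ≤ 12 * n := by
      rcases le_total m 12 with h | h
      · exact ⟨0, by simp [blockExcess], by simp [blockExcess]; omega⟩
      · exact ⟨7, by simpa [blockExcess], by simp [blockExcess]; omega⟩
    obtain ⟨js, rfl, hjs⟩ := ih hjm
    exact ⟨j :: js, rfl, by rw [List.map_cons, List.sum_cons, hjs]; omega⟩

theorem length_flatMap_block (W : List (Fin 3 × Fin 8)) :
    (W.flatMap fun b => block b.1 b.2).length =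
      24 * W.length + ((W.map Prod.snd).map blockExcess).sum := by
  induction W with
  | nil => rfl
  | cons b W ih => simp only [List.flatMap_cons, List.length_append, ih, length_block,
      List.length_cons, List.map_cons, List.sum_cons]; ring

theorem exists_isCircSquareFree_of_le {q n : ℕ} (hq : 2 ≤ q) (h₁ : 24 * q ≤ n) (h₂ : n ≤ 36 * q)
    (h : ∃ w : List (Fin 3), w.length = q ∧ IsCircSquareFree w) :
    ∃ w : List (Fin 3), w.length = n ∧ IsCircSquareFree w := by
  obtain ⟨w, rfl, hw⟩ := h
  obtain ⟨js, hjs, hsum⟩ := exists_sum_blockExcess (m := n - 24 * w.length) hq (by omega)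
  refine ⟨_, ?_, isMarkerSubstitution_block.isCircSquareFree_flatMap (W := w.zip js) ?_ ?_⟩
  · rw [length_flatMap_block, List.map_snd_zip hjs.le, hsum, List.length_zip]
    omega
  · rw [List.length_zip]; omega
  · rwa [List.map_fst_zip hjs.ge]

end Blocks

section SmallLengths

/-- The lengths for which there is no circularly square-free ternary word. -/
def exceptionalLengths : Finset ℕ := {5, 7, 9, 10, 14, 17}

/-- A square-free word found by computer search: for every non-exceptional `n < 48` some factor of
length `n` is circularly square-free, see `circFactorOffset`. -/
def universalWord : List (Fin 3) :=
  [2, 0, 2, 1, 0, 2, 0, 1, 0, 2, 1, 2, 0, 2, 1, 0, 1, 2, 1, 0, 2, 0, 1, 2, 1, 0, 1, 2, 0, 1, 0, 2,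
   0, 1, 2, 1, 0, 2, 1, 2, 0, 1, 0, 2, 1, 0, 1, 2, 0, 2, 1, 0, 2, 0, 1, 0, 2, 1, 2, 0, 2, 1, 0, 1,
   2, 0, 2, 1, 2, 0, 1, 2, 1, 0]

/-- Entry `n` is the position of a circularly square-free factor of length `n` of `universalWord`;
the entries at `0`, `1` and at exceptional lengths are fillers. -/
def circFactorOffset : List ℕ :=
  [0, 0, 0, 1, 0, 0, 2, 0, 0, 0, 0, 0, 5, 32, 0, 2, 10, 0, 12, 20, 23, 29, 5, 0, 17, 38, 32, 0, 7,
   36, 12, 20, 2, 23, 0, 39, 38, 23, 20, 0, 2, 7, 5, 12, 10, 2, 5, 0]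

theorem isCircSquareFree_factor_universalWord : ∀ n < 48, 2 ≤ n → n ∉ exceptionalLengths →
    IsCircSquareFree ((universalWord.drop (circFactorOffset.getD n 0)).take n) := by
  decide +kernel

theorem isCircSquareFree_three_cons : ∀ n ∈ exceptionalLengths,
    IsCircSquareFree (3 :: (universalWord.take (n - 1)).map Fin.castSucc) := by
  decide +kernel

/-- The words obtained from `u` by prepending `n` letters one at a time without ever creating a
square at the beginning. -/
def leftExtensions {k : ℕ} (u : List (Fin k)) : ℕ → List (List (Fin k))
  | 0 => [u]
  | n + 1 => (leftExtensions u n).flatMap fun w =>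
      ((List.finRange k).map (· :: w)).filter (¬ StartsWithSquare ·)

theorem not_isCircSquareFree_of_mem_leftExtensions : ∀ n ∈ exceptionalLengths,
    ∀ w ∈ leftExtensions (k := 3) [0, 1] (n - 2), ¬ IsCircSquareFree w := by
  decide +kernel

theorem append_mem_leftExtensions {k : ℕ} {u v : List (Fin k)} (h : IsSquareFree (v ++ u)) :
    v ++ u ∈ leftExtensions u v.length := by
  induction v with
  | nil => exact List.mem_singleton.2 rfl
  | cons a v ih =>
    refine List.mem_flatMap.2 ⟨v ++ u, ih (h.of_infix (List.suffix_cons a _).isInfix), ?_⟩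
    refine List.mem_filter.2 ⟨List.mem_map_of_mem (List.mem_finRange a), decide_eq_true ?_⟩
    exact isSquareFree_iff_tails.1 h _ ((List.mem_tails _ _).2 List.suffix_rfl)

theorem not_isCircSquareFree_of_length_mem {w : List (Fin 3)}
    (hw : w.length ∈ exceptionalLengths) : ¬ IsCircSquareFree w := by
  intro h
  have hlen : 2 ≤ w.length := (by decide : ∀ n ∈ exceptionalLengths, 2 ≤ n) _ hw
  obtain ⟨v, a, b, rfl⟩ : ∃ v a b, w = v ++ [a, b] := by
    obtain ⟨w', b, rfl⟩ := (List.eq_nil_or_concat' w).resolve_left (by rintro rfl; simp at hlen)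
    obtain ⟨v, a, rfl⟩ := (List.eq_nil_or_concat' w').resolve_left (by rintro rfl; simp at hlen)
    exact ⟨v, a, b, by simp⟩
  have hab : a ≠ b := by
    rintro rfl
    simpa using h.isSquareFree [a] ⟨v, [], by simp⟩
  -- Permuting the letters we may assume that the word ends in `01`.
  obtain ⟨σ, rfl, rfl⟩ : ∃ σ : Equiv.Perm (Fin 3), σ 0 = a ∧ σ 1 = b := by
    have hperm : ∀ a b : Fin 3, a ≠ b → ∃ σ : Equiv.Perm (Fin 3), σ 0 = a ∧ σ 1 = b := by decide
    exact hperm a b hab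
  have hσ : IsCircSquareFree (v.map σ.symm ++ [0, 1]) := by
    simpa using h.map σ.symm.injective
  refine not_isCircSquareFree_of_mem_leftExtensions _ hw _ ?_ hσ
  simpa using append_mem_leftExtensions hσ.isSquareFree

/-- Currie's theorem. -/
theorem exists_isCircSquareFree (n : ℕ) (hn : 2 ≤ n) (hexc : n ∉ exceptionalLengths) :
    ∃ w : List (Fin 3), w.length = n ∧ IsCircSquareFree w := by
  induction n using Nat.strong_induction_on with
  | _ n ih =>
    rcases lt_or_ge n 48 with hsmall | hlarge
    · refine ⟨_, ?_, isCircSquareFree_factor_universalWord n hsmall hn hexc⟩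
      have hoff : ∀ n < 48, circFactorOffset.getD n 0 + n ≤ universalWord.length := by decide
      rw [List.length_take_of_le]
      rw [List.length_drop]
      exact Nat.le_sub_of_add_le' (hoff n hsmall)
    · obtain ⟨q, hq, h₁, h₂, hq_exc⟩ :
          ∃ q, 2 ≤ q ∧ 24 * q ≤ n ∧ n ≤ 36 * q ∧ q ∉ exceptionalLengths := by
        by_contra! hno
        have h₁ := hno (n / 36 + 1)
        have h₂ := hno (n / 36 + 2)
        have h₃ := hno (n / 36 + 3)
        simp only [exceptionalLengths, Finset.mem_insert, Finset.mem_singleton] at h₁ h₂ h₃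
        omega
      exact exists_isCircSquareFree_of_le hq h₁ h₂ (ih q (by omega) hq hq_exc)

theorem exists_isCircSquareFree_four {n : ℕ} (hexc : n ∈ exceptionalLengths) :
    ∃ w : List (Fin 4), w.length = n ∧ IsCircSquareFree w := by
  refine ⟨_, ?_, isCircSquareFree_three_cons n hexc⟩
  revert n; decide

end SmallLengths

section ThueColoring

variable {V V' α β : Type*} {G : SimpleGraph V} {G' : SimpleGraph V'}

theorem exists_walk_support_eq {a : V} {l : List V} (hl : (a :: l).IsChain G.Adj) :
    ∃ b, ∃ p : G.Walk a b, p.support = a :: l := by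
  induction l generalizing a with
  | nil => exact ⟨a, .nil, rfl⟩
  | cons c l ih =>
    obtain ⟨hac, hcl⟩ := List.isChain_cons_cons.1 hl
    obtain ⟨b, p, hp⟩ := ih hcl
    exact ⟨b, .cons hac p, by rw [Walk.support_cons, hp]⟩

theorem isThueColoring_iff {φ : V → α} : IsThueColoring G φ ↔
    ∀ l : List V, l.IsChain G.Adj → l.Nodup → IsSquareFree (l.map φ) := by
  constructor
  · rintro ⟨-, h⟩ l hl hnodup u hu
    by_contra hu_ne
    obtain ⟨l', hl', hmap⟩ := List.infix_map_iff.1 hu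
    obtain - | ⟨a, l'⟩ := l'
    · simp_all
    obtain ⟨b, p, hp⟩ := exists_walk_support_eq (hl.infix hl')
    refine h p (p.isPath_def.2 ?_) u hu_ne (by rw [hp, hmap])
    rw [hp]
    exact hnodup.sublist hl'.sublist
  · refine fun h => ⟨fun a b hab heq => ?_, fun a b p hp u hu heq => hu ?_⟩
    · have := h [a, b] (by simpa using hab) (by simpa using hab.ne) [φ a] ⟨[], [], by simp [heq]⟩
      simp at this
    · exact h p.support p.isChain_adj_support (p.isPath_def.1 hp) u (heq ▸ List.infix_rfl)

theorem IsThueColoring.comp_hom {φ : V' → α} (h : IsThueColoring G' φ) (f : G →g G')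
    (hf : Injective f) : IsThueColoring G (φ ∘ f) := by
  rw [isThueColoring_iff] at h ⊢
  intro l hl hnodup
  rw [← List.map_map]
  exact h _ ((List.isChain_map f).2 (hl.imp fun _ _ hab => f.map_adj hab)) (hnodup.map hf)

theorem IsThueColoring.postcomp {φ : V → α} (h : IsThueColoring G φ) {f : α → β}
    (hf : Injective f) : IsThueColoring G (f ∘ φ) := by
  rw [isThueColoring_iff] at h ⊢
  intro l hl hnodup
  rw [← List.map_map]
  exact (h l hl hnodup).map hf

theorem isThueColoring_of_injective {φ : V → α} (hφ : Injective φ) : IsThueColoring G φ :=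
  isThueColoring_iff.2 fun _ _ hnodup => isSquareFree_of_nodup (hnodup.map hφ)

theorem isThueColoring_of_length_le_three {φ : V → α} (hφ : ∀ a b, G.Adj a b → φ a ≠ φ b)
    (hlen : ∀ l : List V, l.IsChain G.Adj → l.Nodup → l.length ≤ 3) : IsThueColoring G φ :=
  isThueColoring_iff.2 fun l hl hnodup => isSquareFree_of_length_le_three
    ((List.isChain_map φ).2 (hl.imp hφ)) (by simpa using hlen l hl hnodup)

theorem thueNumber_le {k : ℕ} {φ : V → Fin k} (h : IsThueColoring G φ) : thueNumber G ≤ k :=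
  Nat.sInf_le ⟨φ, h⟩

theorem exists_isThueColoring [Finite V] : ∃ φ : V → Fin (thueNumber G), IsThueColoring G φ :=
  Nat.sInf_mem (s := {k | ∃ φ : V → Fin k, IsThueColoring G φ})
    ⟨Nat.card V, _, isThueColoring_of_injective (Finite.equivFin V).injective⟩

theorem thueNumber_le_of_hom [Finite V'] (f : G →g G') (hf : Injective f) :
    thueNumber G ≤ thueNumber G' :=
  have ⟨_, hφ⟩ := exists_isThueColoring (G := G')
  thueNumber_le (hφ.comp_hom f hf)

theorem lt_thueNumber [Finite V] {k : ℕ} (h : ∀ φ : V → Fin k, ¬ IsThueColoring G φ) :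
    k < thueNumber G := by
  by_contra! hle
  obtain ⟨φ, hφ⟩ := exists_isThueColoring (G := G)
  exact h _ (hφ.postcomp (Fin.castLE_injective hle))

theorem one_le_thueNumber [Finite V] [Nonempty V] : 1 ≤ thueNumber G :=
  lt_thueNumber fun φ => isEmptyElim (φ (Classical.arbitrary V))

theorem two_le_thueNumber [Finite V] {a b : V} (hab : G.Adj a b) : 2 ≤ thueNumber G :=
  lt_thueNumber fun _ h => h.1 hab (Subsingleton.elim _ _)

theorem three_le_thueNumber [Finite V] {a b c d : V} (h : [a, b, c, d].IsChain G.Adj)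
    (hnodup : [a, b, c, d].Nodup) : 3 ≤ thueNumber G := by
  refine lt_thueNumber fun φ hφ => ?_
  have hnot : ∀ i j k l : Fin 2, ¬ IsSquareFree [i, j, k, l] := by decide
  exact hnot _ _ _ _ (isThueColoring_iff.1 hφ _ h hnodup)

end ThueColoring

section CycleGraph

variable {n : ℕ}

theorem rotate_ofFn {α : Type*} (φ : Fin n → α) (a : Fin n) :
    (List.ofFn φ).rotate a = (List.ofFn (a + ·)).map φ := by
  refine List.ext_getElem (by simp) fun i hi _ => ?_
  simp only [List.getElem_rotate, List.getElem_map, List.getElem_ofFn, List.length_ofFn]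
  exact congrArg φ (Fin.ext (by rw [Fin.val_add, Nat.add_comm]))

variable [NeZero n]

theorem cycleGraph_adj_iff (hn : 2 ≤ n) {u v : Fin n} :
    (cycleGraph n).Adj u v ↔ u + 1 = v ∨ v + 1 = u := by
  have hone : ((1 : Fin n) : ℕ) = 1 := by rw [Fin.val_one', Nat.mod_eq_of_lt hn]
  rw [cycleGraph_adj', ← hone, Fin.val_inj, Fin.val_inj, sub_eq_iff_eq_add', sub_eq_iff_eq_add',
    or_comm, eq_comm, eq_comm (a := u)]

theorem mk_add_one_eq {i : ℕ} (hi : i + 1 < n) : (⟨i, by omega⟩ + 1 : Fin n) = ⟨i + 1, hi⟩ :=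
  Fin.ext (Fin.val_add_one_of_lt' hi)

theorem isChain_ofFn_add (a : Fin n) :
    (List.ofFn (a + ·)).IsChain (fun u v => u + 1 = v) := by
  refine List.isChain_iff_getElem.2 fun i hi => ?_
  rw [List.length_ofFn] at hi
  rw [List.getElem_ofFn, List.getElem_ofFn, add_assoc, mk_add_one_eq hi]

theorem prefix_ofFn_add {a : Fin n} {l : List (Fin n)}
    (hl : (a :: l).IsChain (fun u v => u + 1 = v)) (hnodup : (a :: l).Nodup) :
    a :: l <+: List.ofFn (a + ·) := by
  have hlen : (a :: l).length ≤ n := by simpa using hnodup.length_le_card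
  refine List.prefix_iff_getElem.2 ⟨by simpa using hlen, fun i hi => ?_⟩
  rw [List.getElem_ofFn]
  induction i with
  | zero => exact (add_zero a).symm
  | succ i ih =>
    rw [← List.isChain_iff_getElem.1 hl i hi, ih (by omega), add_assoc, mk_add_one_eq]

theorem isChain_succ_or_pred (hn : 2 ≤ n) {l : List (Fin n)} (hl : l.IsChain (cycleGraph n).Adj)
    (hnodup : l.Nodup) :
    l.IsChain (fun u v => u + 1 = v) ∨ l.IsChain (fun u v => v + 1 = u) := by
  match l with
  | [] | [_] => simp
  | [a, b] => simpa using (cycleGraph_adj_iff hn).1 (by simpa using hl)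
  | a :: b :: c :: l =>
    obtain ⟨hab, hl⟩ := List.isChain_cons_cons.1 hl
    have hac : a ≠ c := by simp_all
    rcases (cycleGraph_adj_iff hn).1 hab, isChain_succ_or_pred hn hl hnodup.of_cons with
      ⟨h | h, h' | h'⟩
    · exact .inl (List.isChain_cons_cons.2 ⟨h, h'⟩)
    · exact absurd (add_right_cancel (h.trans (List.isChain_cons_cons.1 h').1.symm)) hac
    · exact absurd (h.symm.trans (List.isChain_cons_cons.1 h').1) hac
    · exact .inr (List.isChain_cons_cons.2 ⟨h, h'⟩)

theorem isThueColoring_cycleGraph_iff (hn : 2 ≤ n) {α : Type*} {φ : Fin n → α} :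
    IsThueColoring (cycleGraph n) φ ↔ IsCircSquareFree (List.ofFn φ) := by
  rw [isThueColoring_iff]
  constructor
  · intro h v hv
    obtain ⟨k, rfl⟩ := hv.symm
    rw [← List.rotate_mod, List.length_ofFn, rotate_ofFn φ ⟨k % n, Nat.mod_lt k (by omega)⟩]
    exact h _ ((isChain_ofFn_add _).imp fun _ _ huv => (cycleGraph_adj_iff hn).2 (.inl huv))
      (List.nodup_ofFn.2 (add_right_injective _))
  · intro h l hl hnodup
    have hsucc : ∀ l : List (Fin n), l.IsChain (fun u v => u + 1 = v) → l.Nodup →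
        IsSquareFree (l.map φ) := by
      rintro (- | ⟨a, l⟩) hl hnodup
      · exact isSquareFree_of_nodup List.nodup_nil
      · have := (prefix_ofFn_add hl hnodup).map φ
        rw [← rotate_ofFn] at this
        exact (h _ (List.IsRotated.forall _ _)).of_infix this.isInfix
    rcases isChain_succ_or_pred hn hl hnodup with hl | hl
    · exact hsucc l hl hnodup
    · refine IsSquareFree.of_reverse ?_
      rw [← List.map_reverse]
      exact hsucc _ (List.isChain_reverse.2 hl) (List.nodup_reverse.2 hnodup)

/-- The edge of `cycleGraph n` from `j` to `j + 1`. -/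
def cycleEdge (j : Fin n) : Sym2 (Fin n) := s(j, j + 1)

theorem mem_edgeSet_cycleGraph_iff (hn : 2 ≤ n) {e : Sym2 (Fin n)} :
    e ∈ (cycleGraph n).edgeSet ↔ ∃ j, cycleEdge j = e := by
  induction e with
  | _ u v =>
    rw [mem_edgeSet, cycleGraph_adj_iff hn]
    simp only [cycleEdge, Sym2.eq_iff]
    grind

theorem cycleEdge_injective (hn : 3 ≤ n) : Injective (cycleEdge (n := n)) := by
  intro j k h
  rcases Sym2.eq_iff.1 h with h | ⟨rfl, h⟩
  · exact h.1
  · have htwo : (1 + 1 : Fin n) = 0 := by simpa [add_assoc] using h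
    simp [Fin.ext_iff, Fin.val_add, Nat.mod_eq_of_lt hn,
      Nat.mod_eq_of_lt (show 1 < n by omega)] at htwo

theorem deleteEdges_adj_add_one (hn : 2 ≤ n) {l : List (Sym2 (Fin n))} {v : Fin n} :
    ((cycleGraph n).deleteEdges {e | e ∈ l}).Adj v (v + 1) ↔ cycleEdge v ∉ l := by
  rw [deleteEdges_adj, cycleGraph_adj_iff hn]
  exact and_iff_right (.inl rfl)

theorem adj_or_adj_of_deleteEdges_adj (hn : 2 ≤ n) {l : List (Sym2 (Fin n))} {u v : Fin n}
    (h : ((cycleGraph n).deleteEdges {e | e ∈ l}).Adj u v) :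
    u + 1 = v ∧ cycleEdge u ∉ l ∨ v + 1 = u ∧ cycleEdge v ∉ l := by
  rcases (cycleGraph_adj_iff hn).1 (deleteEdges_adj.1 h).1 with rfl | rfl
  · exact .inl ⟨rfl, (deleteEdges_adj_add_one hn).1 h⟩
  · exact .inr ⟨rfl, (deleteEdges_adj_add_one hn).1 h.symm⟩

theorem exists_forall_cycleEdge_notMem (hn : 3 ≤ n) (K : Finset (Fin n))
    {l : List (Sym2 (Fin n))} (h : K.card * l.length < n) :
    ∃ v, ∀ k ∈ K, cycleEdge (v + k) ∉ l := by
  by_contra! hcut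
  choose k hk hmem using hcut
  refine h.not_ge ?_
  calc n = (Finset.univ : Finset (Fin n)).card := (Finset.card_fin n).symm
    _ ≤ (K ×ˢ l.toFinset).card := by
      refine Finset.card_le_card_of_injOn (fun v => (k v, cycleEdge (v + k v)))
        (fun v _ => by simp [hk, hmem]) fun v _ w _ hvw => ?_
      obtain ⟨hkv, hedge⟩ := Prod.ext_iff.1 hvw
      dsimp only at hkv hedge
      rw [hkv] at hedge
      exact add_right_cancel (cycleEdge_injective hn hedge)
    _ ≤ K.card * l.length := by
      rw [Finset.card_product]
      exact Nat.mul_le_mul_left _ l.toFinset_card_le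

theorem two_le_thueNumber_deleteEdges (hn : 3 ≤ n) {l : List (Sym2 (Fin n))}
    (hl : l.length < n) : 2 ≤ thueNumber ((cycleGraph n).deleteEdges {e | e ∈ l}) := by
  obtain ⟨v, hv⟩ := exists_forall_cycleEdge_notMem hn {0} (l := l) (by simpa using hl)
  exact two_le_thueNumber ((deleteEdges_adj_add_one (by omega)).2 (hv 0 (by simp)))

theorem three_le_thueNumber_deleteEdges (hn : 4 ≤ n) {l : List (Sym2 (Fin n))}
    (hl : 3 * l.length < n) : 3 ≤ thueNumber ((cycleGraph n).deleteEdges {e | e ∈ l}) := by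
  let K : Finset (Fin n) := {⟨0, by omega⟩, ⟨1, by omega⟩, ⟨2, by omega⟩}
  obtain ⟨v, hv⟩ := exists_forall_cycleEdge_notMem (by omega) K
    ((Nat.mul_le_mul_right _ Finset.card_le_three).trans_lt hl)
  have hadj : ∀ i (hi : i < 3), ((cycleGraph n).deleteEdges {e | e ∈ l}).Adj
      (v + ⟨i, by omega⟩) (v + ⟨i + 1, by omega⟩) := by
    intro i hi
    rw [← mk_add_one_eq, ← add_assoc, deleteEdges_adj_add_one (by omega)]
    exact hv _ (by interval_cases i <;> simp [K])
  refine three_le_thueNumber (a := v + ⟨0, by omega⟩) (b := v + ⟨1, by omega⟩)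
    (c := v + ⟨2, by omega⟩) (d := v + ⟨3, by omega⟩) ?_ (by simp [Fin.ext_iff])
  simp only [List.isChain_cons_cons, List.isChain_singleton, and_true]
  exact ⟨hadj 0 (by omega), hadj 1 (by omega), hadj 2 (by omega)⟩

theorem thueNumber_cycleGraph (hn : 4 ≤ n) :
    thueNumber (cycleGraph n) = if n ∈ exceptionalLengths then 4 else 3 := by
  have hiff {α : Type} {φ : Fin n → α} :=
    isThueColoring_cycleGraph_iff (n := n) (by omega) (φ := φ)
  have hle {k : ℕ} (h : ∃ w : List (Fin k), w.length = n ∧ IsCircSquareFree w) :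
      thueNumber (cycleGraph n) ≤ k := by
    obtain ⟨w, rfl, hw⟩ := h
    exact thueNumber_le (hiff.2 (by rwa [List.ofFn_get]))
  split_ifs with hexc
  · refine le_antisymm (hle (exists_isCircSquareFree_four hexc)) (lt_thueNumber fun φ hφ => ?_)
    exact not_isCircSquareFree_of_length_mem (by rwa [List.length_ofFn]) (hiff.1 hφ)
  · refine le_antisymm (hle (exists_isCircSquareFree n (by omega) hexc)) ?_
    simpa using three_le_thueNumber_deleteEdges hn (l := []) (by simp; omega)

theorem val_add_one_of_ne_zero {x : Fin n} (hx : x + 1 ≠ 0) : ((x + 1 : Fin n) : ℕ) = x + 1 := by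
  have hval : (x : ℕ) = (x + 1 : Fin n) - 1 := by
    rw [← Fin.val_sub_one_of_ne_zero hx, add_sub_cancel_right]
  rw [hval, Nat.sub_add_cancel (Nat.one_le_iff_ne_zero.2 (Fin.val_ne_zero_iff.2 hx))]

/-- A cycle without one edge is a path, which embeds into a long cycle. -/
theorem thueNumber_deleteEdges_le_three (hn : 2 ≤ n) {l : List (Sym2 (Fin n))} {j : Fin n}
    (hj : cycleEdge j ∈ l) : thueNumber ((cycleGraph n).deleteEdges {e | e ∈ l}) ≤ 3 := by
  let f (v : Fin n) : Fin (n + 18) := (v - (j + 1)).castAdd 18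
  have hf (v : Fin n) (hv : cycleEdge v ∉ l) : f v + 1 = f (v + 1) := by
    have hne : v - (j + 1) + 1 ≠ 0 := by
      rintro h
      obtain rfl : v = j := by rwa [sub_add_eq_add_sub, add_sub_add_right_eq_sub, sub_eq_zero] at h
      exact hv hj
    have hval := val_add_one_of_ne_zero hne
    refine Fin.ext ?_
    rw [Fin.val_add_one_of_lt' (by simp [f]; omega)]
    simp only [f, Fin.val_castAdd, ← hval]
    rw [sub_add_eq_add_sub]
  let F : (cycleGraph n).deleteEdges {e | e ∈ l} →g cycleGraph (n + 18) :=
    { toFun := f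
      map_rel' := fun {u v} huv => (cycleGraph_adj_iff (by omega)).2 <| by
        rcases adj_or_adj_of_deleteEdges_adj hn huv with ⟨rfl, hu⟩ | ⟨rfl, hv⟩
        · exact .inl (hf u hu)
        · exact .inr (hf v hv) }
  calc thueNumber ((cycleGraph n).deleteEdges {e | e ∈ l})
      ≤ thueNumber (cycleGraph (n + 18)) :=
        thueNumber_le_of_hom F ((Fin.castAdd_injective n 18).comp (sub_left_injective))
    _ = 3 := by
      rw [thueNumber_cycleGraph (by omega), if_neg]
      simp only [exceptionalLengths, Finset.mem_insert, Finset.mem_singleton]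
      omega

/-- Whether `cycleEdge j` is deleted first in the optimal ordering: cutting these edges leaves the
paths on the vertices `3q, 3q + 1, 3q + 2`, the last of which may be shorter. -/
def tripleCut (j : Fin n) : Bool := j.val % 3 == 2 || j.val + 1 == n

theorem div_eq_and_mod_of_tripleCut_eq_false {j : Fin n} (hj : tripleCut j = false) :
    j.val / 3 = (j + 1).val / 3 ∧ (j + 1).val % 3 = j.val % 3 + 1 := by
  simp only [tripleCut, Bool.or_eq_false_iff, beq_eq_false_iff_ne] at hj
  rw [Fin.val_add_one_of_lt' (by omega)]
  omega

theorem thueNumber_deleteEdges_le_two (hn : 2 ≤ n) {l : List (Sym2 (Fin n))}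
    (hl : ∀ j : Fin n, tripleCut j → cycleEdge j ∈ l) :
    thueNumber ((cycleGraph n).deleteEdges {e | e ∈ l}) ≤ 2 := by
  have hcut {j : Fin n} (hj : cycleEdge j ∉ l) : tripleCut j = false :=
    Bool.eq_false_iff.2 fun h => hj (hl j h)
  have hadj : ∀ u v, ((cycleGraph n).deleteEdges {e | e ∈ l}).Adj u v →
      u.val / 3 = v.val / 3 ∧ (u.val % 3 = 1 ↔ v.val % 3 ≠ 1) := by
    intro u v huv
    rcases adj_or_adj_of_deleteEdges_adj hn huv with ⟨rfl, h⟩ | ⟨rfl, h⟩ <;>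
    · have := div_eq_and_mod_of_tripleCut_eq_false (hcut h)
      omega
  refine thueNumber_le (φ := fun v => if v.val % 3 = 1 then 1 else 0) <|
    isThueColoring_of_length_le_three (fun u v huv => ?_) fun p hp hnodup => ?_
  · have := (hadj u v huv).2
    grind
  · have hdiv : p.Pairwise fun u v => u.val / 3 = v.val / 3 :=
      List.pairwise_map.1 (List.isChain_iff_pairwise.1
        ((List.isChain_map _).2 (hp.imp fun u v huv => (hadj u v huv).1)))
    have hmod : (p.map fun v => (⟨v.val % 3, Nat.mod_lt _ three_pos⟩ : Fin 3)).Nodup :=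
      List.pairwise_map.2 <| hnodup.imp₂ (fun u v hne hdiv hmod => hne <| Fin.ext <| by
        have := Fin.mk.inj hmod
        omega) hdiv
    simpa using hmod.length_le_card

theorem thueNumber_deleteEdges_le_one (hn : 2 ≤ n) {l : List (Sym2 (Fin n))}
    (hl : ∀ j : Fin n, cycleEdge j ∈ l) :
    thueNumber ((cycleGraph n).deleteEdges {e | e ∈ l}) ≤ 1 := by
  have hadj : ∀ u v, ¬ ((cycleGraph n).deleteEdges {e | e ∈ l}).Adj u v := fun u v huv =>
    (adj_or_adj_of_deleteEdges_adj hn huv).elim (fun h => h.2 (hl u)) fun h => h.2 (hl v)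
  refine thueNumber_le (φ := fun _ => 0) <|
    isThueColoring_of_length_le_three (fun u v huv => (hadj u v huv).elim) fun p hp _ => ?_
  match p with
  | [] | [_] => simp
  | u :: v :: _ => exact (hadj u v (List.isChain_cons_cons.1 hp).1).elim

/-- An optimal edge ordering of `cycleGraph n`: first the edges whose deletion leaves only paths
with at most three vertices, then all the others. -/
def tripleOrdering (n : ℕ) [NeZero n] : List (Sym2 (Fin n)) :=
  ((List.finRange n).filter tripleCut ++ (List.finRange n).filter (!tripleCut ·)).map cycleEdge

theorem length_tripleOrdering : (tripleOrdering n).length = n := by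
  rw [tripleOrdering, List.length_map, (List.filter_append_perm _ _).length_eq,
    List.length_finRange]

theorem cycleEdge_mem_tripleOrdering (j : Fin n) : cycleEdge j ∈ tripleOrdering n :=
  List.mem_map_of_mem ((List.filter_append_perm _ _).mem_iff.2 (List.mem_finRange j))

theorem isEdgeOrdering_tripleOrdering (hn : 3 ≤ n) :
    IsEdgeOrdering (cycleGraph n) (tripleOrdering n) := by
  refine ⟨((List.filter_append_perm _ _).nodup_iff.2 (List.nodup_finRange n)).map
    (cycleEdge_injective hn), fun e => ?_⟩
  rw [mem_edgeSet_cycleGraph_iff (by omega)]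
  constructor
  · intro he
    obtain ⟨j, -, hj⟩ := List.mem_map.1 he
    exact ⟨j, hj⟩
  · rintro ⟨j, rfl⟩
    exact cycleEdge_mem_tripleOrdering j

omit [NeZero n] in
theorem length_filter_tripleCut_le {t : ℕ} (hnt : n ≤ 3 * t) :
    ((List.finRange n).filter tripleCut).length ≤ t := by
  have hnodup : (((List.finRange n).filter tripleCut).map
      fun j => (⟨j.val / 3, by omega⟩ : Fin t)).Nodup := by
    refine ((List.nodup_finRange n).filter _).map_on fun j hj k hk hjk => Fin.ext ?_
    have := Fin.mk.inj hjk
    simp only [List.mem_filter, List.mem_finRange, tripleCut, Bool.or_eq_true, beq_iff_eq,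
      true_and] at hj hk
    omega
  simpa using hnodup.length_le_card

theorem cycleEdge_mem_take_tripleOrdering {t i : ℕ} (hnt : n ≤ 3 * t) (hi : t ≤ i) {j : Fin n}
    (hj : tripleCut j) : cycleEdge j ∈ (tripleOrdering n).take i := by
  rw [tripleOrdering, List.map_append, List.take_append, List.take_of_length_le]
  · exact List.mem_append_left _ (List.mem_map_of_mem
      (List.mem_filter.2 ⟨List.mem_finRange j, hj⟩))
  · rw [List.length_map]
    exact (length_filter_tripleCut_le hnt).trans hi

theorem tauIndex_eq_of_le_of_ge {V : Type*} {G : SimpleGraph V} {l₀ : List (Sym2 V)} {f : ℕ → ℕ}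
    (hl₀ : IsEdgeOrdering G l₀)
    (hle : ∀ i ≤ l₀.length, thueNumber (G.deleteEdges {e | e ∈ l₀.take i}) ≤ f i)
    (hge : ∀ l, IsEdgeOrdering G l → ∀ i ≤ l₀.length,
      f i ≤ thueNumber (G.deleteEdges {e | e ∈ l.take i})) :
    tauIndex G = (∑ i ∈ Finset.range (l₀.length + 1), f i : ℕ) / (l₀.length + 1) := by
  refine IsLeast.csInf_eq ⟨⟨l₀, hl₀, ?_⟩, ?_⟩
  · rw [tauValue, ← Nat.cast_sum]
    congr 2
    refine Finset.sum_congr rfl fun i hi => ?_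
    have hi := Finset.mem_range_succ_iff.1 hi
    exact le_antisymm (hle i hi) (hge l₀ hl₀ i hi)
  · rintro _ ⟨l, hl, rfl⟩
    have hlen : l.length = l₀.length :=
      ((List.perm_ext_iff_of_nodup hl.1 hl₀.1).2 fun e =>
        (hl.2 e).trans (hl₀.2 e).symm).length_eq
    rw [tauValue, ← Nat.cast_sum, hlen]
    gcongr with i hi
    exact hge l hl i (Finset.mem_range_succ_iff.1 hi)

/-- The Thue numbers along an optimal edge ordering of a cycle with `n ≤ 3 * t` edges and Thue
number `P`. -/
def thueProfile (n t P i : ℕ) : ℕ :=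
  if i = 0 then P else if i < t then 3 else if i < n then 2 else 1

theorem sum_thueProfile {n t : ℕ} (ht : 1 ≤ t) (htn : t ≤ n) (P : ℕ) :
    ∑ i ∈ Finset.range (n + 1), thueProfile n t P i + 2 = P + t + 2 * n := by
  have hsum : ∀ m, ∑ i ∈ Finset.range (m + 1), thueProfile n t P i + (m + 1 - t) + (m + 1 - n) =
      P + 3 * m := by
    intro m
    induction m with
    | zero =>
      rw [Finset.sum_range_one, thueProfile, if_pos rfl]
      omega
    | succ m ih =>
      rw [Finset.sum_range_succ, thueProfile, if_neg m.succ_ne_zero]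
      split_ifs <;> omega
  have := hsum n
  omega

theorem thueNumber_deleteEdges_take_tripleOrdering_le {t : ℕ} (hn : 3 ≤ n) (hnt : n ≤ 3 * t)
    {i : ℕ} (hi : i ≤ n) :
    thueNumber ((cycleGraph n).deleteEdges {e | e ∈ (tripleOrdering n).take i}) ≤
      thueProfile n t (thueNumber (cycleGraph n)) i := by
  rw [thueProfile]
  split_ifs with h0 ht hin
  · simp [h0]
  · obtain ⟨e, he⟩ : ∃ e, e ∈ (tripleOrdering n).take i :=
      List.exists_mem_of_length_pos (by rw [List.length_take, length_tripleOrdering]; omega)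
    obtain ⟨j, -, rfl⟩ := List.mem_map.1 (List.mem_of_mem_take he)
    exact thueNumber_deleteEdges_le_three (by omega) he
  · exact thueNumber_deleteEdges_le_two (by omega) fun j =>
      cycleEdge_mem_take_tripleOrdering hnt (not_lt.1 ht)
  · refine thueNumber_deleteEdges_le_one (by omega) fun j => ?_
    rw [List.take_of_length_le (by rw [length_tripleOrdering]; omega)]
    exact cycleEdge_mem_tripleOrdering j

theorem thueProfile_le_thueNumber_deleteEdges_take {t : ℕ} (hn : 3 ≤ n) (htn : 3 * t ≤ n + 2)
    {l : List (Sym2 (Fin n))} (i : ℕ) :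
    thueProfile n t (thueNumber (cycleGraph n)) i ≤
      thueNumber ((cycleGraph n).deleteEdges {e | e ∈ l.take i}) := by
  have hlen := l.length_take_le i
  rw [thueProfile]
  split_ifs with h0 ht hin
  · simp [h0]
  · exact three_le_thueNumber_deleteEdges (by omega) (by omega)
  · exact two_le_thueNumber_deleteEdges (by omega) (by omega)
  · exact one_le_thueNumber

theorem tauIndex_cycleGraph_eq {t : ℕ} (hn : 3 ≤ n) (hnt : n ≤ 3 * t) (htn : 3 * t ≤ n + 2) :
    tauIndex (cycleGraph n) = (thueNumber (cycleGraph n) + t + 2 * n - 2) / (n + 1) := by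
  have hsum : (∑ i ∈ Finset.range (n + 1), thueProfile n t (thueNumber (cycleGraph n)) i : ℕ) =
      (thueNumber (cycleGraph n) + t + 2 * n - 2 : ℝ) := by
    rw [eq_sub_iff_add_eq]
    exact_mod_cast sum_thueProfile (by omega) (by omega) _
  rw [tauIndex_eq_of_le_of_ge (f := thueProfile n t (thueNumber (cycleGraph n)))
    (isEdgeOrdering_tripleOrdering hn), length_tripleOrdering, hsum]
  · rw [length_tripleOrdering]
    exact fun i => thueNumber_deleteEdges_take_tripleOrdering_le hn hnt
  · exact fun l _ i _ => thueProfile_le_thueNumber_deleteEdges_take hn htn i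

end CycleGraph

/-- the τ-index of the cycle `C_n`, `n ≥ 4`, where `n = 3t − i` with
`i ∈ {0,1,2}` (expressed as `n + i = 3t`). -/
theorem tauIndex_cycleGraph (n t i : ℕ) (hn : 4 ≤ n) (hi : i ≤ 2)
    (hti : n + i = 3 * t) :
    (n ∈ ({5, 7, 9, 10, 14, 17} : Set ℕ) →
      tauIndex (cycleGraph n) = (7 * n + i + 6) / (3 * (n + 1))) ∧
    (n ∉ ({5, 7, 9, 10, 14, 17} : Set ℕ) →
      tauIndex (cycleGraph n) = (7 * n + i + 3) / (3 * (n + 1))) := by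
  have : NeZero n := ⟨by omega⟩
  have hmem : n ∈ ({5, 7, 9, 10, 14, 17} : Set ℕ) ↔ n ∈ exceptionalLengths := by
    simp [exceptionalLengths]
  have ht : (t : ℝ) = (n + i) / 3 := by
    rw [eq_div_iff three_ne_zero, mul_comm]
    exact_mod_cast hti.symm
  rw [tauIndex_cycleGraph_eq (by omega) (by omega) (by omega : 3 * t ≤ n + 2),
    thueNumber_cycleGraph hn, hmem, ht]
  constructor
  · intro hexc
    rw [if_pos hexc, Nat.cast_ofNat]
    field_simp
    ring
  · intro hexc
    rw [if_neg hexc, Nat.cast_ofNat]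
    field_simp
    ring
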